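/- (Proposition 3.1, representation (3.6)) Let (D, F) be a good pair, X ⊆ ℝⁿ convex compact, A affine with A(X) ⊆ M, g ∈ ℝⁿ, and define 2Φ_*(r) = sup_{x,y∈X} inf_{φ∈F, α>0} Φ_r(x, y; φ, α). Then for every r ≥ 0, 2Φ_*(r) = max{ gᵀx − gᵀy : x, y ∈ X, AffH(A(x), A(y)) ≥ e^{−r} }, where AffH(μ, ν) = ∫_Ω √(p_μ(ω)·p_ν(ω)) P(dω) is the Hellinger affinity. -/

import Mathlib

open MeasureTheory Real Matrix Set
open scoped ENNReal

/-- A "good pair" `(𝒟, ℱ)` in the sense of Juditsky–Nemirovski: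
a parametric family of positive probability densities `p μ`, `μ ∈ M`, on `(Ω, P)`,
together with a finite-dimensional linear space `F` of Borel functions on `Ω`
containing the constants, such that log-likelihood ratios belong to `F` and
`μ ↦ ln ∫ e^{φ} p_μ dP` is well defined (finite, witnessed by integrability)
and concave on `M` for every `φ ∈ F`. -/
structure GoodPair (Ω : Type*) [MeasurableSpace Ω] (P : Measure Ω)
    (E : Type*) [NormedAddCommGroup E] [NormedSpace ℝ E] where
  M : Set E
  p : E → Ω → ℝ
  F : Submodule ℝ (Ω → ℝ)
  M_open : IsOpen M
  M_convex : Convex ℝ M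
  p_meas : ∀ μ ∈ M, Measurable (p μ)
  p_pos : ∀ μ ∈ M, ∀ ω, 0 < p μ ω
  p_prob : ∀ μ ∈ M, ∫ ω, p μ ω ∂P = 1
  F_fd : FiniteDimensional ℝ F
  F_meas : ∀ φ ∈ F, Measurable φ
  F_const : ∀ c : ℝ, (fun _ : Ω => c) ∈ F
  logratio_mem : ∀ μ ∈ M, ∀ ν ∈ M, (fun ω => Real.log (p μ ω / p ν ω)) ∈ F
  F_finite : ∀ φ ∈ F, ∀ μ ∈ M, Integrable (fun ω => Real.exp (φ ω) * p μ ω) P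
  F_concave : ∀ φ ∈ F,
    ConcaveOn ℝ M (fun μ => Real.log (∫ ω, Real.exp (φ ω) * p μ ω ∂P))

variable {Ω : Type*} [MeasurableSpace Ω] {P : Measure Ω}
  {E : Type*} [NormedAddCommGroup E] [NormedSpace ℝ E] {n : ℕ}

/-- The distribution of the observation when the parameter is `μ`:
the measure with density `p μ` with respect to `P`. -/
noncomputable def obsMeasure (D : GoodPair Ω P E) (μ : E) : Measure Ω :=
  P.withDensity fun ω => ENNReal.ofReal (D.p μ ω)

/-- The `ε`-risk of an estimate `ghat` of the linear form `gᵀx`, `x ∈ X`: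
`inf {δ | sup_{x ∈ X} Prob_{ω ∼ p_{A(x)}·P} {|ghat ω - gᵀx| > δ} < ε}`. -/
noncomputable def Risk (D : GoodPair Ω P E) (A : (Fin n → ℝ) →ᵃ[ℝ] E)
    (g : Fin n → ℝ) (X : Set (Fin n → ℝ)) (ghat : Ω → ℝ) (ε : ℝ) : ℝ :=
  sInf {δ : ℝ |
    (⨆ x ∈ X, obsMeasure D (A x) {ω | δ < |ghat ω - g ⬝ᵥ x|}) < ENNReal.ofReal ε}

/-- The minimax optimal `ε`-risk over all (Borel) estimates. -/
noncomputable def RiskStar (D : GoodPair Ω P E) (A : (Fin n → ℝ) →ᵃ[ℝ] E)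
    (g : Fin n → ℝ) (X : Set (Fin n → ℝ)) (ε : ℝ) : ℝ :=
  sInf {ρ : ℝ | ∃ ghat : Ω → ℝ, Measurable ghat ∧ ρ = Risk D A g X ghat ε}

/-- The minimax optimal `ε`-risk over affine estimates, i.e. estimates `φ ∈ F`. -/
noncomputable def RiskAff (D : GoodPair Ω P E) (A : (Fin n → ℝ) →ᵃ[ℝ] E)
    (g : Fin n → ℝ) (X : Set (Fin n → ℝ)) (ε : ℝ) : ℝ :=
  sInf {ρ : ℝ | ∃ φ ∈ D.F, ρ = Risk D A g X φ ε}

/-- The function `Φ_r(x, y; φ, α)`. -/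
noncomputable def PhiFun (D : GoodPair Ω P E) (A : (Fin n → ℝ) →ᵃ[ℝ] E)
    (g : Fin n → ℝ) (r : ℝ) (x y : Fin n → ℝ) (φ : Ω → ℝ) (α : ℝ) : ℝ :=
  g ⬝ᵥ x - g ⬝ᵥ y
    + α * Real.log (∫ ω, Real.exp (φ ω / α) * D.p (A y) ω ∂P)
    + α * Real.log (∫ ω, Real.exp (-φ ω / α) * D.p (A x) ω ∂P)
    + 2 * α * r

/-- `Φ_*(r)` defined through the sup-inf value:
`2Φ_*(r) = sup_{x,y ∈ X} inf_{φ ∈ F, α > 0} Φ_r(x, y; φ, α)`. -/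
noncomputable def PhiStarSI (D : GoodPair Ω P E) (A : (Fin n → ℝ) →ᵃ[ℝ] E)
    (g : Fin n → ℝ) (X : Set (Fin n → ℝ)) (r : ℝ) : ℝ :=
  (1/2) * sSup {v : ℝ | ∃ x ∈ X, ∃ y ∈ X,
    v = sInf {w : ℝ | ∃ φ ∈ D.F, ∃ α : ℝ, 0 < α ∧ w = PhiFun D A g r x y φ α}}

/-- `Φ_*(r)` defined through the inf-sup value:
`2Φ_*(r) = inf_{φ ∈ F, α > 0} sup_{x,y ∈ X} Φ_r(x, y; φ, α)`. -/
noncomputable def PhiStarIS (D : GoodPair Ω P E) (A : (Fin n → ℝ) →ᵃ[ℝ] E)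
    (g : Fin n → ℝ) (X : Set (Fin n → ℝ)) (r : ℝ) : ℝ :=
  (1/2) * sInf {v : ℝ | ∃ φ ∈ D.F, ∃ α : ℝ, 0 < α ∧
    v = sSup {w : ℝ | ∃ x ∈ X, ∃ y ∈ X, w = PhiFun D A g r x y φ α}}

/-- The Hellinger affinity `AffH(μ, ν) = ∫_Ω √(p_μ p_ν) dP`. -/
noncomputable def AffH (D : GoodPair Ω P E) (μ ν : E) : ℝ :=
  ∫ ω, Real.sqrt (D.p μ ω * D.p ν ω) ∂P

namespace GoodPair

lemma integral_exp_mul_pos (D : GoodPair Ω P E) {μ : E} (hμ : μ ∈ D.M) {φ : Ω → ℝ}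
    (hφ : φ ∈ D.F) : 0 < ∫ ω, Real.exp (φ ω) * D.p μ ω ∂P := by
  have hP : P ≠ 0 := by
    rintro rfl
    simpa using D.p_prob μ hμ
  have hpos : ∀ ω, 0 < Real.exp (φ ω) * D.p μ ω := fun ω =>
    mul_pos (Real.exp_pos _) (D.p_pos μ hμ ω)
  rw [integral_pos_iff_support_of_nonneg (fun ω => (hpos ω).le) (D.F_finite φ hφ μ hμ)]
  have hsupp : Function.support (fun ω => Real.exp (φ ω) * D.p μ ω) = Set.univ :=
    Set.eq_univ_of_forall fun ω => (hpos ω).ne'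
  rw [hsupp]
  exact Measure.measure_univ_pos.2 hP

lemma half_logratio_mem (D : GoodPair Ω P E) {μ ν : E} (hμ : μ ∈ D.M) (hν : ν ∈ D.M) :
    (fun ω => Real.log (D.p μ ω / D.p ν ω) / 2) ∈ D.F := by
  have h := D.F.smul_mem (1 / 2 : ℝ) (D.logratio_mem μ hμ ν hν)
  convert h using 1
  ext ω
  simp only [Pi.smul_apply, smul_eq_mul]
  ring

lemma exp_half_logratio_mul {a b : ℝ} (ha : 0 < a) (hb : 0 < b) :
    Real.exp (Real.log (a / b) / 2) * b = Real.sqrt (a * b) := by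
  rw [← Real.log_sqrt (by positivity), Real.exp_log (by positivity), Real.sqrt_div ha.le,
    Real.sqrt_mul ha.le, div_mul_eq_mul_div, div_eq_iff (by positivity), mul_assoc,
    Real.mul_self_sqrt hb.le]

lemma affH_eq (D : GoodPair Ω P E) {μ ν : E} (hμ : μ ∈ D.M) (hν : ν ∈ D.M) :
    AffH D μ ν = ∫ ω, Real.exp (Real.log (D.p μ ω / D.p ν ω) / 2) * D.p ν ω ∂P := by
  simp only [AffH, exp_half_logratio_mul (D.p_pos μ hμ _) (D.p_pos ν hν _)]

lemma affH_comm (D : GoodPair Ω P E) (μ ν : E) : AffH D μ ν = AffH D ν μ := by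
  simp only [AffH, mul_comm]

lemma affH_pos (D : GoodPair Ω P E) {μ ν : E} (hμ : μ ∈ D.M) (hν : ν ∈ D.M) :
    0 < AffH D μ ν := by
  rw [D.affH_eq hμ hν]
  exact D.integral_exp_mul_pos hν (D.half_logratio_mem hμ hν)

lemma affH_self (D : GoodPair Ω P E) {μ : E} (hμ : μ ∈ D.M) : AffH D μ μ = 1 := by
  rw [AffH, ← D.p_prob μ hμ]
  simp only [Real.sqrt_mul_self (D.p_pos μ hμ _).le]

lemma integrable_sqrt (D : GoodPair Ω P E) {μ ν : E} (hμ : μ ∈ D.M) (hν : ν ∈ D.M) :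
    Integrable (fun ω => Real.sqrt (D.p μ ω * D.p ν ω)) P := by
  simpa only [exp_half_logratio_mul (D.p_pos μ hμ _) (D.p_pos ν hν _)] using
    D.F_finite _ (D.half_logratio_mem hμ hν) ν hν

/-- Cauchy–Schwarz for the Hellinger affinity, in logarithmic form. -/
lemma two_mul_log_affH_le (D : GoodPair Ω P E) {μ ν : E} (hμ : μ ∈ D.M) (hν : ν ∈ D.M)
    {φ : Ω → ℝ} (hφ : φ ∈ D.F) :
    2 * Real.log (AffH D μ ν) ≤ Real.log (∫ ω, Real.exp (φ ω) * D.p ν ω ∂P)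
      + Real.log (∫ ω, Real.exp (-φ ω) * D.p μ ω ∂P) := by
  have hφ' : (fun ω => -φ ω) ∈ D.F := D.F.neg_mem hφ
  have hIi := D.F_finite φ hφ ν hν
  have hJi := D.F_finite _ hφ' μ hμ
  have hI := D.integral_exp_mul_pos hν hφ
  have hJ := D.integral_exp_mul_pos hμ hφ'
  set I := ∫ ω, Real.exp (φ ω) * D.p ν ω ∂P
  set J := ∫ ω, Real.exp (-φ ω) * D.p μ ω ∂P
  have key : AffH D μ ν ≤ Real.sqrt (I * J) := by
    have hpt : ∀ ω, Real.sqrt (D.p μ ω * D.p ν ω) ≤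
        Real.sqrt (I * J) / 2 * ((Real.exp (φ ω) * D.p ν ω) / I
          + (Real.exp (-φ ω) * D.p μ ω) / J) := by
      intro ω
      have ha := mul_pos (Real.exp_pos (φ ω)) (D.p_pos ν hν ω)
      have hb := mul_pos (Real.exp_pos (-φ ω)) (D.p_pos μ hμ ω)
      have hab : D.p μ ω * D.p ν ω
          = (Real.exp (φ ω) * D.p ν ω) * (Real.exp (-φ ω) * D.p μ ω) := by
        rw [Real.exp_neg]
        field_simp
      rw [hab]
      generalize Real.exp (φ ω) * D.p ν ω = a at ha
      generalize Real.exp (-φ ω) * D.p μ ω = b at hb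
      apply Real.sqrt_le_iff.2 ⟨by positivity, ?_⟩
      rw [mul_pow, div_pow, Real.sq_sqrt (by positivity)]
      have hamgm : 4 * ((a / I) * (b / J)) ≤ (a / I + b / J) ^ 2 := by
        nlinarith [sq_nonneg (a / I - b / J)]
      calc a * b = I * J / 2 ^ 2 * (4 * ((a / I) * (b / J))) := by field_simp; norm_num
        _ ≤ _ := by gcongr
    calc AffH D μ ν ≤ ∫ ω, Real.sqrt (I * J) / 2 * ((Real.exp (φ ω) * D.p ν ω) / I
          + (Real.exp (-φ ω) * D.p μ ω) / J) ∂P :=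
          integral_mono (D.integrable_sqrt hμ hν)
            (((hIi.div_const I).add (hJi.div_const J)).const_mul _) hpt
      _ = Real.sqrt (I * J) := by
          rw [integral_const_mul, integral_add (hIi.div_const I) (hJi.div_const J),
            integral_div, integral_div, div_self hI.ne', div_self hJ.ne']
          ring
  have hlog := Real.log_le_log (D.affH_pos hμ hν) key
  rw [Real.log_sqrt (by positivity), Real.log_mul hI.ne' hJ.ne'] at hlog
  linarith

/-- The half log-likelihood ratio turns `two_mul_log_affH_le` into an equality. -/
lemma exists_log_add_log_eq (D : GoodPair Ω P E) {μ ν : E} (hμ : μ ∈ D.M) (hν : ν ∈ D.M) :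
    ∃ φ ∈ D.F, Real.log (∫ ω, Real.exp (φ ω) * D.p ν ω ∂P)
      + Real.log (∫ ω, Real.exp (-φ ω) * D.p μ ω ∂P) = 2 * Real.log (AffH D μ ν) := by
  refine ⟨_, D.half_logratio_mem hμ hν, ?_⟩
  have hneg : ∀ ω, -(Real.log (D.p μ ω / D.p ν ω) / 2) = Real.log (D.p ν ω / D.p μ ω) / 2 := by
    intro ω
    rw [← inv_div (D.p μ ω), Real.log_inv, neg_div]
  simp only [hneg]
  rw [← D.affH_eq hμ hν, ← D.affH_eq hν hμ, D.affH_comm ν μ]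
  ring

lemma exp_neg_le_affH_iff (D : GoodPair Ω P E) {μ ν : E} (hμ : μ ∈ D.M) (hν : ν ∈ D.M) (r : ℝ) :
    Real.exp (-r) ≤ AffH D μ ν ↔ ∀ φ ∈ D.F, -(2 * r) ≤
      Real.log (∫ ω, Real.exp (φ ω) * D.p ν ω ∂P)
        + Real.log (∫ ω, Real.exp (-φ ω) * D.p μ ω ∂P) := by
  rw [← Real.le_log_iff_exp_le (D.affH_pos hμ hν)]
  constructor
  · intro h φ hφ
    linarith [D.two_mul_log_affH_le hμ hν hφ]
  · intro h
    obtain ⟨φ, hφ, heq⟩ := D.exists_log_add_log_eq hμ hν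
    linarith [h φ hφ]

lemma le_phiFun (D : GoodPair Ω P E) (A : (Fin n → ℝ) →ᵃ[ℝ] E) (g : Fin n → ℝ) (r : ℝ)
    {x y : Fin n → ℝ} (hx : A x ∈ D.M) (hy : A y ∈ D.M) {φ : Ω → ℝ} (hφ : φ ∈ D.F)
    {α : ℝ} (hα : 0 < α) :
    g ⬝ᵥ x - g ⬝ᵥ y + 2 * α * (Real.log (AffH D (A x) (A y)) + r)
      ≤ PhiFun D A g r x y φ α := by
  have hφα : (fun ω => φ ω / α) ∈ D.F := by
    have h := D.F.smul_mem α⁻¹ hφ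
    convert h using 1
    ext ω
    simp only [Pi.smul_apply, smul_eq_mul]
    ring
  have h := mul_le_mul_of_nonneg_left (D.two_mul_log_affH_le hx hy hφα) hα.le
  simp only [PhiFun, neg_div]
  linarith

lemma exists_phiFun_eq (D : GoodPair Ω P E) (A : (Fin n → ℝ) →ᵃ[ℝ] E) (g : Fin n → ℝ) (r : ℝ)
    {x y : Fin n → ℝ} (hx : A x ∈ D.M) (hy : A y ∈ D.M) {α : ℝ} (hα : 0 < α) :
    ∃ φ ∈ D.F, PhiFun D A g r x y φ α
      = g ⬝ᵥ x - g ⬝ᵥ y + 2 * α * (Real.log (AffH D (A x) (A y)) + r) := by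
  obtain ⟨φ, hφ, heq⟩ := D.exists_log_add_log_eq hx hy
  refine ⟨α • φ, D.F.smul_mem α hφ, ?_⟩
  simp only [PhiFun, Pi.smul_apply, smul_eq_mul, neg_div, mul_div_cancel_left₀ _ hα.ne']
  linear_combination α * heq

lemma sInf_phiFun_of_le (D : GoodPair Ω P E) (A : (Fin n → ℝ) →ᵃ[ℝ] E) (g : Fin n → ℝ) (r : ℝ)
    {x y : Fin n → ℝ} (hx : A x ∈ D.M) (hy : A y ∈ D.M)
    (h : Real.exp (-r) ≤ AffH D (A x) (A y)) :
    sInf {w : ℝ | ∃ φ ∈ D.F, ∃ α : ℝ, 0 < α ∧ w = PhiFun D A g r x y φ α}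
      = g ⬝ᵥ x - g ⬝ᵥ y := by
  have hc : 0 ≤ Real.log (AffH D (A x) (A y)) + r := by
    linarith [(Real.le_log_iff_exp_le (D.affH_pos hx hy)).2 h]
  refine (isGLB_iff_le_iff.2 fun b => ?_).csInf_eq ?_
  · constructor
    · rintro hb _ ⟨φ, hφ, α, hα, rfl⟩
      have := D.le_phiFun A g r hx hy hφ hα
      have : 0 ≤ 2 * α * (Real.log (AffH D (A x) (A y)) + r) := by positivity
      linarith
    · intro hb
      refine le_of_forall_pos_le_add fun ε hε => ?_
      set c := Real.log (AffH D (A x) (A y)) + r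
      have hα : 0 < ε / (2 * (c + 1)) := by positivity
      obtain ⟨φ, hφ, heq⟩ := D.exists_phiFun_eq A g r hx hy hα
      refine (hb ⟨φ, hφ, _, hα, rfl⟩).trans ?_
      rw [heq]
      have : 2 * (ε / (2 * (c + 1))) * c ≤ ε := by
        rw [show 2 * (ε / (2 * (c + 1))) * c = ε * c / (c + 1) by field_simp,
          div_le_iff₀ (by positivity)]
        nlinarith
      exact add_le_add_right this _
  · obtain ⟨φ, hφ, -⟩ := D.exists_phiFun_eq A g r hx hy one_pos
    exact ⟨_, φ, hφ, 1, one_pos, rfl⟩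

/-- Below the affinity threshold the infimum is `-∞`, for which `sInf` takes the value `0`. -/
lemma sInf_phiFun_of_lt (D : GoodPair Ω P E) (A : (Fin n → ℝ) →ᵃ[ℝ] E) (g : Fin n → ℝ) (r : ℝ)
    {x y : Fin n → ℝ} (hx : A x ∈ D.M) (hy : A y ∈ D.M)
    (h : AffH D (A x) (A y) < Real.exp (-r)) :
    sInf {w : ℝ | ∃ φ ∈ D.F, ∃ α : ℝ, 0 < α ∧ w = PhiFun D A g r x y φ α} = 0 := by
  have hc : Real.log (AffH D (A x) (A y)) + r < 0 := by
    linarith [(Real.log_lt_iff_lt_exp (D.affH_pos hx hy)).2 h]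
  refine Real.sInf_of_not_bddBelow ?_
  rintro ⟨b, hb⟩
  set c := Real.log (AffH D (A x) (A y)) + r with hc_def
  set d := g ⬝ᵥ x - g ⬝ᵥ y with hd_def
  have hα : 0 < (|d - b| + 1) / -c := div_pos (by positivity) (neg_pos.2 hc)
  obtain ⟨φ, hφ, heq⟩ := D.exists_phiFun_eq A g r hx hy hα
  have hle := hb ⟨φ, hφ, _, hα, rfl⟩
  rw [heq, ← hc_def, ← hd_def] at hle
  have : 2 * ((|d - b| + 1) / -c) * c = -2 * (|d - b| + 1) := by
    have := hc.ne
    field_simp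
  rw [this] at hle
  linarith [le_abs_self (d - b), abs_nonneg (d - b)]

lemma continuousOn_log_integral [FiniteDimensional ℝ E] (D : GoodPair Ω P E) {φ : Ω → ℝ}
    (hφ : φ ∈ D.F) :
    ContinuousOn (fun μ => Real.log (∫ ω, Real.exp (φ ω) * D.p μ ω ∂P)) D.M :=
  (D.F_concave φ hφ).continuousOn D.M_open

/-- The affinity is upper semicontinuous, so its superlevel sets over a compact are compact. -/
lemma isCompact_affH_superlevel [FiniteDimensional ℝ E] (D : GoodPair Ω P E)
    {X : Set (Fin n → ℝ)} (hXcp : IsCompact X) (A : (Fin n → ℝ) →ᵃ[ℝ] E)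
    (hA : ∀ x ∈ X, A x ∈ D.M) (r : ℝ) :
    IsCompact {z : (Fin n → ℝ) × (Fin n → ℝ) |
      z ∈ X ×ˢ X ∧ Real.exp (-r) ≤ AffH D (A z.1) (A z.2)} := by
  have hAc : Continuous A := A.continuous_of_finiteDimensional
  have hset : {z : (Fin n → ℝ) × (Fin n → ℝ) |
      z ∈ X ×ˢ X ∧ Real.exp (-r) ≤ AffH D (A z.1) (A z.2)}
      = (X ×ˢ X) ∩ ⋂ φ : D.F, ((X ×ˢ X) ∩ (fun z : (Fin n → ℝ) × (Fin n → ℝ) =>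
        Real.log (∫ ω, Real.exp (φ.1 ω) * D.p (A z.2) ω ∂P)
          + Real.log (∫ ω, Real.exp (-φ.1 ω) * D.p (A z.1) ω ∂P)) ⁻¹' Set.Ici (-(2 * r))) := by
    ext z
    simp only [Set.mem_ofPred_eq, Set.mem_inter_iff, Set.mem_iInter, Set.mem_preimage, Set.mem_Ici]
    refine and_congr_right fun hz => ?_
    rw [D.exp_neg_le_affH_iff (hA _ hz.1) (hA _ hz.2)]
    exact ⟨fun h φ => ⟨hz, h φ.1 φ.2⟩, fun h φ hφ => (h ⟨φ, hφ⟩).2⟩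
  rw [hset]
  refine (hXcp.prod hXcp).inter_right (isClosed_iInter fun φ => ?_)
  refine ContinuousOn.preimage_isClosed_of_isClosed ?_ (hXcp.prod hXcp).isClosed isClosed_Ici
  refine ContinuousOn.add ?_ ?_
  · exact (D.continuousOn_log_integral φ.2).comp (hAc.comp continuous_snd).continuousOn
      fun z hz => hA _ hz.2
  · exact (D.continuousOn_log_integral (D.F.neg_mem φ.2)).comp
      (hAc.comp continuous_fst).continuousOn fun z hz => hA _ hz.1

end GoodPair

/-- **Proposition 3.1, representation (3.6).** For every `r ≥ 0`,
`2Φ_*(r) = max { gᵀx − gᵀy : x, y ∈ X, AffH(A(x), A(y)) ≥ e^{−r} }`, where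
`2Φ_*(r) = sup_{x,y∈X} inf_{φ∈F, α>0} Φ_r(x,y;φ,α)`. -/
theorem phiStar_eq_hellinger_modulus
    {Ω : Type*} [MeasurableSpace Ω] [TopologicalSpace Ω] [PolishSpace Ω] [BorelSpace Ω]
    {P : Measure Ω} [SigmaFinite P] {m n : ℕ}
    (D : GoodPair Ω P (Fin m → ℝ))
    (X : Set (Fin n → ℝ)) (hXne : X.Nonempty) (hXcp : IsCompact X) (hXcv : Convex ℝ X)
    (A : (Fin n → ℝ) →ᵃ[ℝ] (Fin m → ℝ)) (hA : ∀ x ∈ X, A x ∈ D.M)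
    (g : Fin n → ℝ) (r : ℝ) (hr : 0 ≤ r) :
    IsGreatest
      {v : ℝ | ∃ x ∈ X, ∃ y ∈ X,
        Real.exp (-r) ≤ AffH D (A x) (A y) ∧ v = g ⬝ᵥ x - g ⬝ᵥ y}
      (2 * PhiStarSI D A g X r) := by
  have hset : {v : ℝ | ∃ x ∈ X, ∃ y ∈ X,
      v = sInf {w : ℝ | ∃ φ ∈ D.F, ∃ α : ℝ, 0 < α ∧ w = PhiFun D A g r x y φ α}}
      = {v : ℝ | ∃ x ∈ X, ∃ y ∈ X,
        Real.exp (-r) ≤ AffH D (A x) (A y) ∧ v = g ⬝ᵥ x - g ⬝ᵥ y} := by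
    ext v
    constructor
    · rintro ⟨x, hx, y, hy, rfl⟩
      by_cases h : Real.exp (-r) ≤ AffH D (A x) (A y)
      · exact ⟨x, hx, y, hy, h, D.sInf_phiFun_of_le A g r (hA x hx) (hA y hy) h⟩
      · refine ⟨x, hx, x, hx, ?_, ?_⟩
        · rw [D.affH_self (hA x hx)]
          exact Real.exp_le_one_iff.2 (neg_nonpos.2 hr)
        · rw [D.sInf_phiFun_of_lt A g r (hA x hx) (hA y hy) (not_le.1 h), sub_self]
    · rintro ⟨x, hx, y, hy, h, rfl⟩
      exact ⟨x, hx, y, hy, (D.sInf_phiFun_of_le A g r (hA x hx) (hA y hy) h).symm⟩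
  have himage : {v : ℝ | ∃ x ∈ X, ∃ y ∈ X,
      Real.exp (-r) ≤ AffH D (A x) (A y) ∧ v = g ⬝ᵥ x - g ⬝ᵥ y}
      = (fun z : (Fin n → ℝ) × (Fin n → ℝ) => g ⬝ᵥ z.1 - g ⬝ᵥ z.2) ''
        {z | z ∈ X ×ˢ X ∧ Real.exp (-r) ≤ AffH D (A z.1) (A z.2)} := by
    ext v
    constructor
    · rintro ⟨x, hx, y, hy, h, rfl⟩
      exact ⟨(x, y), ⟨⟨hx, hy⟩, h⟩, rfl⟩
    · rintro ⟨⟨x, y⟩, ⟨⟨hx, hy⟩, h⟩, rfl⟩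
      exact ⟨x, hx, y, hy, h, rfl⟩
  have hvalue : 2 * PhiStarSI D A g X r = sSup {v : ℝ | ∃ x ∈ X, ∃ y ∈ X,
      Real.exp (-r) ≤ AffH D (A x) (A y) ∧ v = g ⬝ᵥ x - g ⬝ᵥ y} := by
    rw [PhiStarSI, hset]
    ring
  rw [hvalue, himage]
  have hcont : Continuous (fun z : (Fin n → ℝ) × (Fin n → ℝ) => g ⬝ᵥ z.1 - g ⬝ᵥ z.2) := by
    simp only [dotProduct]
    fun_prop
  refine ((D.isCompact_affH_superlevel hXcp A hA r).image hcont).isGreatest_sSup ?_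
  obtain ⟨x, hx⟩ := hXne
  refine ⟨_, (x, x), ⟨⟨hx, hx⟩, ?_⟩, rfl⟩
  rw [D.affH_self (hA x hx)]
  exact Real.exp_le_one_iff.2 (neg_nonpos.2 hr)
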